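/- Let L be a field of characteristic p. A unit L[F^r]-module (V, φ) is finitely generated as a left L[F^r]-module (i.e., there is a finite subset S ⊆ V such that the only φ-stable L-subspace of V containing S is V itself) if and only if V is finite-dimensional as an L-vector space. -/

import Mathlib

/-!
Common definitions: unit `R[F^r]`-modules (Emerton–Kisin / Lyubeznik style), following
the conventions of the paper.  Throughout, `q = p ^ r` and for a commutative ring `R` of
(exponential) characteristic `p`, a unit `R[F^r]`-module is an `R`-module `M` together with
an additive `q`-semilinear map `φ : M → M` whose induced structural map
`R ⊗_{Frob} M → M`, `c ⊗ m ↦ c • φ m`, is bijective.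
-/

open scoped TensorProduct

section Preamble

/-- `R` viewed as a module over itself via the `q = p ^ r`-power Frobenius:
`c • x = c ^ p ^ r * x`. -/
def FrobTwist (p r : ℕ) (R : Type*) : Type _ := R

instance (p r : ℕ) (R : Type*) [CommRing R] : AddCommGroup (FrobTwist p r R) :=
  inferInstanceAs (AddCommGroup R)

noncomputable instance (p r : ℕ) (R : Type*) [CommRing R] [ExpChar R p] :
    Module R (FrobTwist p r R) :=
  Module.compHom R (iterateFrobenius R p r)

theorem FrobTwist.smul_def {p r : ℕ} {R : Type*} [CommRing R] [ExpChar R p] (c : R)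
    (x : FrobTwist p r R) : c • x = (c ^ p ^ r * (show R from x) : R) := rfl

variable (p r : ℕ)
variable (R : Type*) [CommRing R] [ExpChar R p]
variable {M : Type*} [AddCommGroup M] [Module R M]

/-- `φ` is additive and `q = p ^ r`-semilinear: `φ (c • m) = c ^ q • φ m`. -/
def IsFrobSemilinear (φ : M →+ M) : Prop :=
  ∀ (c : R) (m : M), φ (c • m) = c ^ p ^ r • φ m

/-- The structural map `R ⊗_{Frob} M → M`, `c ⊗ m ↦ c • φ m`. -/
noncomputable def unitMap (φ : M →+ M) (hφ : IsFrobSemilinear p r R φ) :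
    FrobTwist p r R ⊗[R] M →+ M :=
  TensorProduct.liftAddHom
    (AddMonoidHom.mk'
      (fun c : FrobTwist p r R =>
        AddMonoidHom.mk' (fun m : M => (show R from c) • φ m)
          (fun m m' => by
            show (show R from c) • φ (m + m') =
              (show R from c) • φ m + (show R from c) • φ m'
            rw [map_add, smul_add]))
      (fun c c' => by
        ext m
        show ((show R from c) + (show R from c')) • φ m = _
        rw [add_smul]
        rfl))
    (fun a c m => by
      show (a ^ p ^ r * (show R from c)) • φ m = (show R from c) • φ (a • m)
      rw [hφ, mul_comm, mul_smul])

/-- `(M, φ)` is a unit `R[F^r]`-module: `φ` is `q = p ^ r`-semilinear and the induced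
structural map `R ⊗_{Frob} M → M` is bijective. -/
def IsUnitFMod (φ : M →+ M) : Prop :=
  ∃ hφ : IsFrobSemilinear p r R φ, Function.Bijective (unitMap p r R φ hφ)

/-- `(M, φ)` is finitely generated as a left `R[F^r]`-module: there is a finite subset
`s ⊆ M` such that the only `φ`-stable `R`-submodule of `M` containing `s` is `M` itself. -/
def IsFGFMod (φ : M →+ M) : Prop :=
  ∃ s : Finset M, ∀ N : Submodule R M, (∀ x ∈ N, φ x ∈ N) → (↑s : Set M) ⊆ ↑N → N = ⊤

/-- A root of `(M, φ)`: a finitely generated submodule `M₀` such that the submodule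
generated by `φ (M₀)` contains `M₀`, and such that the only `φ`-stable submodule
containing `M₀` is `M` itself. -/
def IsRoot (φ : M →+ M) (M₀ : Submodule R M) : Prop :=
  M₀.FG ∧ M₀ ≤ Submodule.span R (⇑φ '' ↑M₀) ∧
    ∀ N : Submodule R M, (∀ x ∈ N, φ x ∈ N) → M₀ ≤ N → N = ⊤

end Preamble

/-!
Write `F N` for the span of `f(N)`, where `f` is a semilinear endomorphism of `V`. If the finitely
generated subspace `W` generates `V` under `f`, then `V` is the union of the increasing chain
`N₀ = 0`, `Nₙ₊₁ = W + F Nₙ`. If moreover `f(V)` spans `V`, then `V` is also the union of the `F Nₙ`,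
so that `W ≤ F Nₙ` for some `n`, and hence `Nₙ₊₁ = F Nₙ`. As `F` does not increase dimensions,
`Nₙ = Nₙ₊₁`. Thus `Nₙ` is `f`-stable and contains `W`, so it is all of `V`.
-/

open Submodule

section SpanImage

variable {R R₂ M M₂ : Type*} [Semiring R] [Semiring R₂] {σ : R →+* R₂}
  [AddCommMonoid M] [Module R M] [AddCommMonoid M₂] [Module R₂ M₂] (f : M →ₛₗ[σ] M₂)

/-- The submodule spanned by the image of `N` under a semilinear map `f`. Unlike `Submodule.map`,
it makes sense when `σ` is not surjective, as for the Frobenius of an imperfect field. -/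
def spanImage (N : Submodule R M) : Submodule R₂ M₂ :=
  span R₂ (f '' N)

theorem gc_spanImage_comap : GaloisConnection (spanImage f) (comap f) := fun _ _ =>
  span_le.trans Set.image_subset_iff

theorem spanImage_span (s : Set M) : spanImage f (span R s) = span R₂ (f '' s) := by
  refine le_antisymm ((gc_spanImage_comap f).l_le (span_le.2 ?_))
    (span_mono (Set.image_mono subset_span))
  exact fun x hx => subset_span (Set.mem_image_of_mem f hx)

variable {f} {N : Submodule R M}

theorem fg_spanImage (hN : N.FG) : (spanImage f N).FG := by
  obtain ⟨s, hs, rfl⟩ := fg_def.1 hN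
  exact fg_def.2 ⟨f '' s, hs.image f, (spanImage_span f s).symm⟩

theorem spanFinrank_spanImage_le (hN : N.FG) :
    (spanImage f N).spanFinrank ≤ N.spanFinrank := by
  classical
  obtain ⟨s, hs_card, rfl⟩ := hN.exists_span_finset_card_eq_spanFinrank
  rw [← hs_card, spanImage_span]
  exact (spanFinrank_span_le_ncard_of_finite (s.finite_toSet.image f)).trans
    ((Set.ncard_image_le s.finite_toSet).trans_eq (Set.ncard_coe_finset s))

end SpanImage

section OrbitSpan

variable {R M : Type*} [Semiring R] {σ : R →+* R} [AddCommMonoid M] [Module R M]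
  (f : M →ₛₗ[σ] M) (W : Submodule R M)

/-- The submodule spanned by `W, f(W), …, fⁿ⁻¹(W)`, defined recursively; it exhausts the smallest
`f`-stable submodule containing `W` as `n` grows. -/
def orbitSpan : ℕ → Submodule R M
  | 0 => ⊥
  | n + 1 => W ⊔ spanImage f (orbitSpan n)

theorem monotone_orbitSpan : Monotone (orbitSpan f W) := by
  refine monotone_nat_of_le_succ fun n => ?_
  induction n with
  | zero => exact bot_le
  | succ n ih => exact sup_le_sup_left ((gc_spanImage_comap f).monotone_l ih) W

theorem iSup_orbitSpan : ⨆ n, orbitSpan f W n = W ⊔ spanImage f (⨆ n, orbitSpan f W n) :=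
  calc ⨆ n, orbitSpan f W n
    _ = orbitSpan f W 0 ⊔ ⨆ n, orbitSpan f W (n + 1) := (sup_iSup_nat_succ _).symm
    _ = ⨆ n, W ⊔ spanImage f (orbitSpan f W n) := bot_sup_eq _
    _ = W ⊔ ⨆ n, spanImage f (orbitSpan f W n) := sup_iSup.symm
    _ = W ⊔ spanImage f (⨆ n, orbitSpan f W n) := by rw [(gc_spanImage_comap f).l_iSup]

variable {f W}

theorem fg_orbitSpan (hW : W.FG) (n : ℕ) : (orbitSpan f W n).FG := by
  induction n with
  | zero => exact fg_bot
  | succ n ih => exact hW.sup (fg_spanImage ih)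

theorem exists_le_spanImage_orbitSpan (hW : W.FG) (hf : span R (Set.range f) = ⊤)
    (hgen : ⨆ n, orbitSpan f W n = ⊤) : ∃ n, W ≤ spanImage f (orbitSpan f W n) := by
  have hsup : ⨆ n, spanImage f (orbitSpan f W n) = ⊤ := by
    rw [← (gc_spanImage_comap f).l_iSup, hgen, spanImage, top_coe, Set.image_univ, hf]
  have hmono : Monotone fun n => spanImage f (orbitSpan f W n) :=
    (gc_spanImage_comap f).monotone_l.comp (monotone_orbitSpan f W)
  have hcompact := (CompleteLattice.isCompactElement_iff_le_of_directed_sSup_le _ W).1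
    ((fg_iff_compact W).1 hW)
  obtain ⟨_, ⟨n, rfl⟩, hn⟩ := hcompact _ (Set.range_nonempty _) hmono.directed_le.directedOn_range
    (le_top.trans_eq hsup.symm)
  exact ⟨n, hn⟩

end OrbitSpan

section DivisionRing

variable {K V : Type*} [DivisionRing K] {σ : K →+* K} [AddCommGroup V] [Module K V]
  {f : V →ₛₗ[σ] V} {W : Submodule K V}

theorem finrank_spanImage_le {N : Submodule K V} (hN : N.FG) :
    Module.finrank K (spanImage f N) ≤ Module.finrank K N := by
  simpa only [Module.finrank_eq_spanFinrank_of_free, spanFinrank_top]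
    using spanFinrank_spanImage_le hN

theorem orbitSpan_eq_orbitSpan_succ (hW : W.FG) {n : ℕ}
    (hn : W ≤ spanImage f (orbitSpan f W n)) :
    orbitSpan f W n = orbitSpan f W (n + 1) := by
  have : FiniteDimensional K (orbitSpan f W (n + 1)) :=
    Module.Finite.iff_fg.2 (fg_orbitSpan hW (n + 1))
  refine eq_of_le_of_finrank_le (monotone_orbitSpan f W n.le_succ) ?_
  rw [orbitSpan, sup_eq_right.2 hn]
  exact finrank_spanImage_le (fg_orbitSpan hW n)

theorem finiteDimensional_of_fg_generating (hW : W.FG) (hf : span K (Set.range f) = ⊤)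
    (hgen : ∀ N : Submodule K V, W ⊔ spanImage f N ≤ N → N = ⊤) : FiniteDimensional K V := by
  have hsup : ⨆ n, orbitSpan f W n = ⊤ := hgen _ (iSup_orbitSpan f W).ge
  obtain ⟨n, hn⟩ := exists_le_spanImage_orbitSpan hW hf hsup
  have htop : orbitSpan f W n = ⊤ := hgen _ (orbitSpan_eq_orbitSpan_succ hW hn).ge
  exact Module.finite_def.2 (htop ▸ fg_orbitSpan hW n)

theorem statement7_general (hf : span K (Set.range f) = ⊤) :
    (∃ s : Finset V, ∀ N : Submodule K V, (∀ x ∈ N, f x ∈ N) → (s : Set V) ⊆ N → N = ⊤) ↔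
      FiniteDimensional K V := by
  constructor
  · rintro ⟨s, hs⟩
    refine finiteDimensional_of_fg_generating ⟨s, rfl⟩ hf fun N hN => ?_
    obtain ⟨hsN, hfN⟩ := sup_le_iff.1 hN
    exact hs N ((gc_spanImage_comap f).le_u hfN) (span_le.1 hsN)
  · intro h
    obtain ⟨s, hs⟩ := Module.finite_def.1 h
    exact ⟨s, fun N _ hsN => top_unique (hs ▸ span_le.2 hsN)⟩

end DivisionRing

section Frobenius

variable {p r : ℕ} {R M : Type*} [CommRing R] [ExpChar R p] [AddCommGroup M] [Module R M]
  {φ : M →+ M}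

/-- A `p ^ r`-semilinear additive map, bundled as a map semilinear over the iterated Frobenius. -/
def IsFrobSemilinear.toSemilinearMap (hφ : IsFrobSemilinear p r R φ) :
    M →ₛₗ[iterateFrobenius R p r] M :=
  { φ with map_smul' := hφ }

theorem span_range_eq_top_of_surjective_unitMap (hφ : IsFrobSemilinear p r R φ)
    (hsurj : Function.Surjective (unitMap p r R φ hφ)) : span R (Set.range φ) = ⊤ := by
  refine eq_top_iff'.2 fun x => ?_
  obtain ⟨t, rfl⟩ := hsurj x
  induction t using TensorProduct.induction_on with
  | zero => simp only [map_zero, zero_mem]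
  | add t t' ht ht' => simpa only [map_add] using add_mem ht ht'
  | tmul c m => exact smul_mem _ (show R from c) (subset_span (Set.mem_range_self m))

end Frobenius

/-- A unit `L[F^r]`-module over a field `L` of characteristic `p` is
finitely generated as a left `L[F^r]`-module if and only if it is finite-dimensional
over `L`. -/
theorem statement7 (p r : ℕ) [Fact p.Prime] (hr : 0 < r)
    (L : Type*) [Field L] [CharP L p]
    (V : Type*) [AddCommGroup V] [Module L V]
    (φ : V →+ V) (hφ : IsFrobSemilinear p r L φ)
    (hunit : Function.Bijective (unitMap p r L φ hφ)) :
    IsFGFMod L φ ↔ FiniteDimensional L V := by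
  exact statement7_general (f := hφ.toSemilinearMap)
    (span_range_eq_top_of_surjective_unitMap hφ hunit.surjective)
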